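/- Let d ≥ 1, let E ⊆ ℝ^d be measurable, let Q ⊆ ℝ^d be an axis-parallel cube, and let 0 < λ ≤ 1 be such that |E ∩ Q| = λ|Q|. Then there is a constant C depending only on d such that σ(∂Q \ cl* E) ≤ C · λ^{-(d-1)/d} · σ(∂*E ∩ interior(Q)), where ∂Q is the topological boundary of Q. -/

import Mathlib

open MeasureTheory Metric Set Filter
open scoped ENNReal Topology

noncomputable section

/-- `ℝ^d` as Euclidean space. -/
abbrev Ed (d : ℕ) := EuclideanSpace ℝ (Fin d)

/-- An axis-parallel cube `∏_i [a_i, a_i + l]` with positive side length `l`. -/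
def IsCube {d : ℕ} (Q : Set (Ed d)) : Prop :=
  ∃ (a : Ed d) (l : ℝ), 0 < l ∧ Q = {x : Ed d | ∀ i, x i ∈ Set.Icc (a i) (a i + l)}

/-- The measure-theoretic closure. -/
def mtClosure {d : ℕ} (E : Set (Ed d)) : Set (Ed d) :=
  {x | 0 < Filter.limsup (fun r : ℝ => volume (ball x r ∩ E) / ENNReal.ofReal (r ^ d)) (𝓝[>] 0)}

/-- The measure-theoretic boundary. -/
def mtBoundary {d : ℕ} (E : Set (Ed d)) : Set (Ed d) :=
  {x | 0 < Filter.limsup (fun r : ℝ => volume (ball x r \ E) / ENNReal.ofReal (r ^ d)) (𝓝[>] 0) ∧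
       0 < Filter.limsup (fun r : ℝ => volume (ball x r ∩ E) / ENNReal.ofReal (r ^ d)) (𝓝[>] 0)}


/-- Exchanging the coordinates selected by `s` between two independent samples of a product
probability measure again gives a sample of that measure. -/
theorem measurePreserving_piecewise_prod {ι α : Type*} [Fintype ι] [MeasurableSpace α]
    (ν : ι → Measure α) [∀ i, IsProbabilityMeasure (ν i)] (s : ι → Prop) [DecidablePred s] :
    MeasurePreserving (fun (p : (ι → α) × (ι → α)) i => if s i then p.2 i else p.1 i)
      ((Measure.pi ν).prod (Measure.pi ν)) (Measure.pi ν) := by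
  have h1 := (measurePreserving_arrowProdEquivProdArrow α α ι ν ν).symm
  have h2 := measurePreserving_pi (fun i => (ν i).prod (ν i)) ν
    (f := fun i (q : α × α) => if s i then q.2 else q.1) (fun i => by
      by_cases h : s i
      · simpa [h] using measurePreserving_snd (μ := ν i) (ν := ν i)
      · simpa [h] using measurePreserving_fst (μ := ν i) (ν := ν i))
  exact h2.comp h1

/-- If a property can only change along a coordinate direction `k` at points of `T k`, then the
product of the measures of a set where it holds and of a set where it fails is at most the total
measure of the `T k`. -/
theorem measure_mul_measure_le_sum {m : ℕ} {α : Type*} [MeasurableSpace α]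
    (ν : Fin m → Measure α) [∀ i, IsProbabilityMeasure (ν i)] (R : Fin m → Set α)
    (P : (Fin m → α) → Prop) (T : Fin m → Set (Fin m → α)) (hT : ∀ k, MeasurableSet (T k))
    (hP : ∀ k x t, x ∈ univ.pi R → t ∈ R k → x ∉ T k → P x → P (Function.update x k t))
    (A B : Set (Fin m → α)) (hA : ∀ x ∈ A, x ∈ univ.pi R ∧ P x)
    (hB : ∀ x ∈ B, x ∈ univ.pi R ∧ ¬ P x) :
    Measure.pi ν A * Measure.pi ν B ≤ ∑ k, Measure.pi ν (T k) := by
  set w : ℕ → (Fin m → α) × (Fin m → α) → (Fin m → α) :=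
    fun k p i => if i.val < k then p.2 i else p.1 i with hw
  have hsub : A ×ˢ B ⊆ ⋃ k : Fin m, w k ⁻¹' (T k) := by
    rintro ⟨x, y⟩ ⟨hx, hy⟩
    obtain ⟨hxR, hxP⟩ := hA x hx
    obtain ⟨hyR, hyP⟩ := hB y hy
    by_contra hcon
    simp only [mem_iUnion, mem_preimage, not_exists] at hcon
    have hR : ∀ k, w k (x, y) ∈ univ.pi R := by
      intro k i _
      simp only [hw]
      split_ifs
      · exact hyR i trivial
      · exact hxR i trivial
    have key : ∀ k ≤ m, P (w k (x, y)) := by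
      intro k
      induction k with
      | zero => intro _; simpa [hw] using hxP
      | succ k ih =>
        intro hk
        have hup : w (k + 1) (x, y) = Function.update (w k (x, y)) ⟨k, hk⟩ (y ⟨k, hk⟩) := by
          funext i
          by_cases hi : i = ⟨k, hk⟩
          · subst hi; simp [hw]
          · have hne : i.val ≠ k := fun h => hi (Fin.ext h)
            have : i.val < k + 1 ↔ i.val < k := by omega
            simp [hw, hi, this]
        rw [hup]
        exact hP _ _ _ (hR k) (hyR _ trivial) (hcon ⟨k, hk⟩) (ih (by omega))
    apply hyP
    have : w m (x, y) = y := by funext i; simp [hw]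
    simpa [this] using key m le_rfl
  calc Measure.pi ν A * Measure.pi ν B
      = ((Measure.pi ν).prod (Measure.pi ν)) (A ×ˢ B) := (Measure.prod_prod _ _).symm
    _ ≤ ((Measure.pi ν).prod (Measure.pi ν)) (⋃ k : Fin m, w k ⁻¹' (T k)) := measure_mono hsub
    _ ≤ ∑ k : Fin m, ((Measure.pi ν).prod (Measure.pi ν)) (w k ⁻¹' (T k)) :=
        measure_iUnion_fintype_le _ _
    _ = ∑ k, Measure.pi ν (T k) := by
        refine Finset.sum_congr rfl fun k _ => ?_
        exact (measurePreserving_piecewise_prod ν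
          (fun i : Fin m => i.val < (k : ℕ))).measure_preimage
          (hT k).nullMeasurableSet

/-- A form of the Loomis–Whitney inequality for product probability measures: `K i` plays the
role of the cylinder over the projection of `A` along the `i`-th coordinate. -/
theorem measure_le_sum_rpow_of_cylinders {ι : Type*} {α : ι → Type*} [Fintype ι] [DecidableEq ι]
    [∀ i, MeasurableSpace (α i)] (ν : ∀ i, Measure (α i)) [∀ i, IsProbabilityMeasure (ν i)]
    {p : ℝ} (hp : Real.HolderConjugate (Fintype.card ι) p)
    (K : ι → Set (∀ i, α i)) (hK : ∀ i, MeasurableSet (K i))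
    (hcyl : ∀ i x t, x ∈ K i → Function.update x i t ∈ K i)
    (A : Set (∀ i, α i)) (hA : ∀ i, A ⊆ K i) :
    Measure.pi ν A ≤ (∑ i, Measure.pi ν (K i)) ^ p := by
  set f : (∀ i, α i) → ℝ≥0∞ := fun x => ∑ i, (K i).indicator 1 x with hf
  have hfm : Measurable f :=
    Finset.measurable_sum _ fun i _ => measurable_one.indicator (hK i)
  have h := lintegral_prod_lintegral_pow_le ν hp hfm
  have hsum : ∫⁻ x, f x ∂Measure.pi ν = ∑ i, Measure.pi ν (K i) := by
    simp only [hf]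
    rw [lintegral_finsetSum _ fun i _ => measurable_one.indicator (hK i)]
    exact Finset.sum_congr rfl fun i _ => lintegral_indicator_one (hK i)
  rw [hsum] at h
  refine le_trans ?_ h
  have hAm : A ⊆ ⋂ i, K i := subset_iInter hA
  have hKm : MeasurableSet (⋂ i, K i) := MeasurableSet.iInter hK
  calc Measure.pi ν A ≤ Measure.pi ν (⋂ i, K i) := measure_mono hAm
    _ = ∫⁻ x, (⋂ i, K i).indicator 1 x ∂Measure.pi ν := (lintegral_indicator_one hKm).symm
    _ ≤ _ := by
        refine lintegral_mono fun x => ?_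
        by_cases hx : x ∈ ⋂ i, K i
        · rw [indicator_of_mem hx]
          refine Finset.one_le_prod' fun i _ => ENNReal.one_le_rpow ?_ ?_
          · calc (1 : ℝ≥0∞) = ∫⁻ _, 1 ∂ν i := by simp
              _ ≤ _ := by
                refine lintegral_mono fun t => ?_
                have : Function.update x i t ∈ K i := hcyl i x t (mem_iInter.1 hx i)
                calc (1 : ℝ≥0∞) = (K i).indicator 1 (Function.update x i t) := by
                      rw [indicator_of_mem this]; rfl
                  _ ≤ f (Function.update x i t) :=
                      Finset.single_le_sum (f := fun j => (K j).indicator 1 (Function.update x i t))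
                        (fun _ _ => zero_le) (Finset.mem_univ i)
          · exact one_div_pos.2 (sub_pos.2 hp.lt)
        · rw [indicator_of_notMem hx]; exact zero_le
/-- Suppose that no point of `A` begins or ends an interval contained in `B`. If an open interval
meets the complement of `interior A ∪ interior B`, and does so only in points of `A`, then it is
contained in `A`. -/
theorem subinterval_subset_of_no_jump {α β u v : ℝ} {A B : Set ℝ} (hdisj : Disjoint A B)
    (hAr : ∀ t ∈ A, ∀ s > t, s ≤ β → ¬ Ioo t s ⊆ B) (hAl : ∀ t ∈ A, ∀ s < t, α ≤ s → ¬ Ioo s t ⊆ B)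
    (hJ : Ioo u v ⊆ Ioo α β) {x : ℝ} (hx : x ∈ Ioo u v)
    (hxF : x ∉ interior A ∪ interior B)
    (hF : ∀ y ∈ Ioo u v, y ∉ interior A ∪ interior B → y ∈ A) : Ioo u v ⊆ A := by
  intro b hb
  by_contra hbA
  have hbB : b ∈ interior B := by
    by_contra h
    exact hbA (hF b hb fun h' => h'.elim (fun h'' => hbA (interior_subset h'')) h)
  have hcl : ∀ y ∈ closure (interior B), y ∉ interior A := fun y hy hyA => by
    obtain ⟨z, hzA, hzB⟩ := mem_closure_iff.1 hy _ isOpen_interior hyA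
    exact hdisj.le_bot ⟨interior_subset hzA, interior_subset hzB⟩
  have hxB : x ∉ interior B := fun h => hxF (Or.inr h)
  rcases lt_trichotomy x b with hlt | heq | hgt
  · have hcomp : IsCompact (Icc x b \ interior B) := isCompact_Icc.diff isOpen_interior
    obtain ⟨y, ⟨hyI, hyB⟩, hymax⟩ := hcomp.exists_isGreatest ⟨x, ⟨le_rfl, hlt.le⟩, hxB⟩
    have hyb : y < b := lt_of_le_of_ne hyI.2 fun h => hyB (h ▸ hbB)
    have hsub : Ioo y b ⊆ interior B := fun z hz => by
      by_contra h
      exact absurd (hymax ⟨⟨hyI.1.trans hz.1.le, hz.2.le⟩, h⟩) (not_le.2 hz.1)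
    have hyJ : y ∈ Ioo u v := ⟨hx.1.trans_le hyI.1, hyb.trans hb.2⟩
    have hycl : y ∈ closure (interior B) :=
      closure_mono hsub (by rw [closure_Ioo hyb.ne]; exact left_mem_Icc.2 hyb.le)
    exact hAr y (hF y hyJ fun h => h.elim (hcl y hycl) hyB) b hyb (hJ hb).2.le
      (hsub.trans interior_subset)
  · exact hxB (heq ▸ hbB)
  · have hcomp : IsCompact (Icc b x \ interior B) := isCompact_Icc.diff isOpen_interior
    obtain ⟨y, ⟨hyI, hyB⟩, hymin⟩ := hcomp.exists_isLeast ⟨x, ⟨hgt.le, le_rfl⟩, hxB⟩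
    have hyb : b < y := lt_of_le_of_ne hyI.1 fun h => hyB (h ▸ hbB)
    have hsub : Ioo b y ⊆ interior B := fun z hz => by
      by_contra h
      exact absurd (hymin ⟨⟨hz.1.le, hz.2.le.trans hyI.2⟩, h⟩) (not_le.2 hz.2)
    have hyJ : y ∈ Ioo u v := ⟨hb.1.trans hyb, hyI.2.trans_lt hx.2⟩
    have hycl : y ∈ closure (interior B) :=
      closure_mono hsub (by rw [closure_Ioo hyb.ne]; exact right_mem_Icc.2 hyb.le)
    exact hAl y (hF y hyJ fun h => h.elim (hcl y hycl) hyB) b hyb (hJ hb).1.le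
      (hsub.trans interior_subset)

/-- An open interval covered by two disjoint sets, each a countable union of relatively closed
sets, is contained in one of them, as soon as no point of either set begins or ends an interval
contained in the other one. -/
theorem Ioo_subset_or_subset_of_no_jump {α β : ℝ} {A B : Set ℝ} (hAB : Ioo α β ⊆ A ∪ B)
    (hdisj : Disjoint A B) (a b : ℕ → Set ℝ) (ha : ∀ k, IsClosed (a k)) (hb : ∀ k, IsClosed (b k))
    (haA : ∀ k, Ioo α β ∩ a k ⊆ A) (hbB : ∀ k, Ioo α β ∩ b k ⊆ B)
    (hAa : A ⊆ ⋃ k, a k) (hBb : B ⊆ ⋃ k, b k)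
    (hAr : ∀ t ∈ A, ∀ s > t, s ≤ β → ¬ Ioo t s ⊆ B) (hAl : ∀ t ∈ A, ∀ s < t, α ≤ s → ¬ Ioo s t ⊆ B)
    (hBr : ∀ t ∈ B, ∀ s > t, s ≤ β → ¬ Ioo t s ⊆ A)
    (hBl : ∀ t ∈ B, ∀ s < t, α ≤ s → ¬ Ioo s t ⊆ A) :
    Ioo α β ⊆ A ∨ Ioo α β ⊆ B := by
  set F : Set ℝ := Ioo α β \ (interior A ∪ interior B) with hFdef
  have hO : IsOpen (interior A ∪ interior B) := isOpen_interior.union isOpen_interior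
  rcases F.eq_empty_or_nonempty with hF | hF
  · have hsub : Ioo α β ⊆ interior A ∪ interior B := sdiff_eq_empty.1 hF
    rcases isPreconnected_Ioo.subset_or_subset isOpen_interior isOpen_interior
      (hdisj.mono interior_subset interior_subset) hsub with h | h
    · exact Or.inl (h.trans interior_subset)
    · exact Or.inr (h.trans interior_subset)
  exfalso
  have hlc : IsLocallyClosed F := isOpen_Ioo.isLocallyClosed.inter hO.isClosed_compl.isLocallyClosed
  have : LocallyCompactSpace F := hlc.locallyCompactSpace
  have : Nonempty F := hF.to_subtype
  obtain ⟨k, hk⟩ := nonempty_interior_of_iUnion_of_closed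
    (f := fun k : ℕ ⊕ ℕ => (Subtype.val : F → ℝ) ⁻¹' (Sum.elim a b k))
    (fun k => by
      cases k with
      | inl k => exact (ha k).preimage continuous_subtype_val
      | inr k => exact (hb k).preimage continuous_subtype_val)
    (by
      refine eq_univ_of_forall fun x => ?_
      rcases hAB x.2.1 with h | h
      · obtain ⟨k, hk⟩ := mem_iUnion.1 (hAa h)
        exact mem_iUnion.2 ⟨Sum.inl k, hk⟩
      · obtain ⟨k, hk⟩ := mem_iUnion.1 (hBb h)
        exact mem_iUnion.2 ⟨Sum.inr k, hk⟩)
  obtain ⟨x, hx⟩ := hk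
  obtain ⟨V, hV, hVx⟩ := (mem_nhds_subtype F x _).1 (mem_interior_iff_mem_nhds.1 hx)
  obtain ⟨u, v, hxuv, huv⟩ := mem_nhds_iff_exists_Ioo_subset.1
    (Filter.inter_mem hV (isOpen_Ioo.mem_nhds x.2.1))
  have hJ : Ioo u v ⊆ Ioo α β := huv.trans inter_subset_right
  have hmem : ∀ y ∈ Ioo u v, y ∉ interior A ∪ interior B → y ∈ Sum.elim a b k := fun y hy hyF =>
    hVx (show (⟨y, hJ hy, hyF⟩ : F) ∈ Subtype.val ⁻¹' V from (huv hy).1)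
  cases k with
  | inl k =>
    have := subinterval_subset_of_no_jump hdisj hAr hAl hJ hxuv x.2.2
      fun y hy hyF => haA k ⟨hJ hy, hmem y hy hyF⟩
    exact x.2.2 (Or.inl (interior_maximal this isOpen_Ioo hxuv))
  | inr k =>
    have := subinterval_subset_of_no_jump hdisj.symm hBr hBl hJ hxuv
      (by rw [union_comm]; exact x.2.2)
      fun y hy hyF => hbB k ⟨hJ hy, hmem y hy (by rwa [union_comm])⟩
    exact x.2.2 (Or.inr (interior_maximal this isOpen_Ioo hxuv))
/-- The points at which `E` has Lebesgue density zero, measured with sup-norm balls. -/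
def zeroDensity {m : ℕ} (E : Set (Fin m → ℝ)) : Set (Fin m → ℝ) :=
  {x | ∀ ε : ℝ, 0 < ε →
    ∀ᶠ r in 𝓝[>] (0 : ℝ), volume (closedBall x r ∩ E) ≤ ENNReal.ofReal (ε * r ^ m)}

/-- The points at which `E` has small density at all scales below `(k + 1)⁻¹`. -/
def lowDensity {m : ℕ} (k : ℕ) (E : Set (Fin m → ℝ)) : Set (Fin m → ℝ) :=
  {x | ∀ r ∈ Ioo (0 : ℝ) (1 / (k + 1)),
    volume (closedBall x r ∩ E) ≤ ENNReal.ofReal (1 / 16 * (1 / 2) ^ m * r ^ m)}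

theorem lowDensity_mono {m : ℕ} {k l : ℕ} (h : k ≤ l) (E : Set (Fin m → ℝ)) :
    lowDensity k E ⊆ lowDensity l E := fun _ hx r hr =>
  hx r ⟨hr.1, hr.2.trans_le (one_div_le_one_div_of_le (by positivity) (by gcongr))⟩

theorem zeroDensity_subset_iUnion_lowDensity {m : ℕ} (E : Set (Fin m → ℝ)) :
    zeroDensity E ⊆ ⋃ k, lowDensity k E := by
  intro x hx
  have h := hx (1 / 16 * (1 / 2) ^ m) (by positivity)
  obtain ⟨δ, hδ, hsub⟩ := mem_nhdsGT_iff_exists_Ioo_subset.1 h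
  obtain ⟨k, hk⟩ := exists_nat_one_div_lt (show (0 : ℝ) < δ from hδ)
  exact mem_iUnion.2 ⟨k, fun r hr => hsub ⟨hr.1, hr.2.trans hk⟩⟩

theorem disjoint_closure_lowDensity_zeroDensity_compl {m : ℕ} (k : ℕ) {E : Set (Fin m → ℝ)}
    (hE : MeasurableSet E) : Disjoint (closure (lowDensity k E)) (zeroDensity Eᶜ) := by
  rw [Set.disjoint_left]
  intro x hx hx'
  have h1 := hx' (1 / 4) (by norm_num)
  have h2 : ∀ᶠ r in 𝓝[>] (0 : ℝ), r ∈ Ioo (0 : ℝ) (1 / (k + 1) / 2) :=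
    Ioo_mem_nhdsGT (by positivity)
  obtain ⟨r, hr1, hr0, hr2⟩ := (h1.and h2).exists
  obtain ⟨y, hy, hxy⟩ := Metric.mem_closure_iff.1 hx r hr0
  have hy' := hy (2 * r) ⟨by linarith, by linarith⟩
  have hsub : closedBall x r ⊆ closedBall y (2 * r) :=
    closedBall_subset_closedBall' (by linarith)
  have hvol : volume (closedBall x r) = ENNReal.ofReal ((2 * r) ^ m) := by
    simpa using Real.volume_pi_closedBall x hr0.le
  have hsum : volume (closedBall x r) ≤
      ENNReal.ofReal (1 / 16 * (1 / 2) ^ m * (2 * r) ^ m) + ENNReal.ofReal (1 / 4 * r ^ m) := by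
    rw [← measure_inter_add_sdiff (closedBall x r) hE]
    exact add_le_add ((measure_mono (inter_subset_inter_left _ hsub)).trans hy') hr1
  rw [hvol, ← ENNReal.ofReal_add (by positivity) (by positivity),
    ENNReal.ofReal_le_ofReal_iff (by positivity), mul_assoc, ← mul_pow,
    show 1 / 2 * (2 * r) = r by ring, mul_pow] at hsum
  have : (1 : ℝ) ≤ 2 ^ m := one_le_pow₀ (by norm_num)
  have hrm : 0 < r ^ m := by positivity
  nlinarith

theorem disjoint_zeroDensity_compl {m : ℕ} {E : Set (Fin m → ℝ)} (hE : MeasurableSet E) :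
    Disjoint (zeroDensity E) (zeroDensity Eᶜ) := by
  rw [Set.disjoint_left]
  intro x hx
  obtain ⟨k, hk⟩ := mem_iUnion.1 (zeroDensity_subset_iUnion_lowDensity E hx)
  exact Set.disjoint_left.1 (disjoint_closure_lowDensity_zeroDensity_compl k hE)
    (subset_closure hk)

theorem ae_mem_zeroDensity_compl {m : ℕ} {E : Set (Fin m → ℝ)} (hE : MeasurableSet E) :
    ∀ᵐ x, x ∈ E → x ∈ zeroDensity Eᶜ := by
  filter_upwards [(IsUnifLocDoublingMeasure.vitaliFamily
    (volume : Measure (Fin m → ℝ)) 1).ae_tendsto_measure_inter_div_of_measurableSet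
      hE.compl] with x hx hxE ε hε
  rw [indicator_of_notMem (by simpa using hxE)] at hx
  have hlim := hx.comp (IsUnifLocDoublingMeasure.tendsto_closedBall_filterAt volume (K := 1)
    (x := x) (fun _ : ℝ => x) (fun r : ℝ => r) tendsto_id
    (by filter_upwards [self_mem_nhdsWithin] with r hr
        simpa using (show (0 : ℝ) < r from hr).le))
  have hpos : (0 : ℝ≥0∞) < ENNReal.ofReal (ε * (1 / 2) ^ m) := by
    rw [ENNReal.ofReal_pos]; positivity
  filter_upwards [hlim.eventually (gt_mem_nhds hpos), self_mem_nhdsWithin] with r hr hr0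
  have hr0 : 0 < r := hr0
  have hvol : volume (closedBall x r) = ENNReal.ofReal ((2 * r) ^ m) := by
    simpa using Real.volume_pi_closedBall x hr0.le
  simp only [Function.comp_apply] at hr
  have h := (ENNReal.div_le_iff (by rw [hvol]; simpa using pow_pos (by linarith) m)
    (by rw [hvol]; exact ENNReal.ofReal_ne_top)).1 hr.le
  rw [hvol, ← ENNReal.ofReal_mul (by positivity), mul_assoc, ← mul_pow,
    show 1 / 2 * (2 * r) = r by ring] at h
  rwa [inter_comm]

theorem volume_zeroDensity_compl_diff {m : ℕ} {E : Set (Fin m → ℝ)} (hE : MeasurableSet E) :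
    volume (zeroDensity Eᶜ \ E) = 0 := by
  refine measure_mono_null ?_ (ae_iff.1 (ae_mem_zeroDensity_compl hE.compl))
  intro x hx hcon
  have := hcon hx.2
  rw [compl_compl] at this
  exact Set.disjoint_left.1 (disjoint_zeroDensity_compl hE) this hx.1

theorem volume_setOf_mem_and_removeNth_mem {n : ℕ} (j : Fin (n + 1)) (W : Set ℝ)
    (Z : Set (Fin n → ℝ)) :
    volume {x : Fin (n + 1) → ℝ | x j ∈ W ∧ j.removeNth x ∈ Z} = volume W * volume Z := by
  have h := (volume_preserving_piFinSuccAbove (fun _ : Fin (n + 1) => ℝ) j).measure_preimage_equiv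
    (W ×ˢ Z)
  rw [Measure.volume_eq_prod, Measure.prod_prod] at h
  exact h
theorem closedBall_insertNth_mem {n : ℕ} (j : Fin (n + 1)) {s t r : ℝ} {y z : Fin n → ℝ}
    (hst : |s - t| ≤ r) (hyz : dist y z ≤ r) :
    (j.insertNth s y : Fin (n + 1) → ℝ) ∈ closedBall (j.insertNth t z : Fin (n + 1) → ℝ) r := by
  rw [mem_closedBall, Fin.dist_insertNth_insertNth, Real.dist_eq]
  exact max_le hst hyz

/-- Almost no line in the `j`-th direction contains a point of low density at which a segment of
uniform length, with starting parameter in a prescribed short interval, of points of full density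
starts. The sign `σ` selects the orientation of the line. -/
theorem volume_uniform_jump_eq_zero {n : ℕ} {E : Set (Fin (n + 1) → ℝ)} (hE : MeasurableSet E)
    (j : Fin (n + 1)) {σ : ℝ} (hσ : |σ| = 1) (k : ℕ) (p : ℝ) :
    volume {z : Fin n → ℝ | ∃ u ∈ Icc p (p + 1 / (k + 1) / 2),
      (j.insertNth (σ * u) z : Fin (n + 1) → ℝ) ∈ lowDensity k E ∧
      ∀ τ ∈ Ioo (0 : ℝ) (1 / (k + 1)),
        (j.insertNth (σ * (u + τ)) z : Fin (n + 1) → ℝ) ∈ zeroDensity Eᶜ} = 0 := by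
  set δ : ℝ := 1 / (k + 1) with hδ
  have hδ0 : 0 < δ := by positivity
  set A : Set (Fin n → ℝ) := {z | ∃ u ∈ Icc p (p + δ / 2),
      (j.insertNth (σ * u) z : Fin (n + 1) → ℝ) ∈ lowDensity k E ∧
      ∀ τ ∈ Ioo (0 : ℝ) δ, (j.insertNth (σ * (u + τ)) z : Fin (n + 1) → ℝ) ∈ zeroDensity Eᶜ} with hA
  by_contra hvolA
  have hσ0 : σ ≠ 0 := by rintro rfl; simp at hσ
  have : NeBot (ae ((volume : Measure (Fin n → ℝ)).restrict A)) := by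
    rw [ae_neBot]; simpa [Measure.restrict_eq_zero] using hvolA
  obtain ⟨z₀, hz₀⟩ :=
    (IsUnifLocDoublingMeasure.ae_tendsto_measure_inter_div volume A 1).exists
  have hlim := hz₀ (l := 𝓝[>] (0 : ℝ)) (fun _ : ℝ => z₀) (fun r : ℝ => r) tendsto_id
    (by filter_upwards [self_mem_nhdsWithin] with r hr
        simpa using (show (0 : ℝ) < r from hr).le)
  have hhalf : ENNReal.ofReal (1 / 2) < 1 := by
    rw [← ENNReal.ofReal_one]; exact (ENNReal.ofReal_lt_ofReal_iff one_pos).2 (by norm_num)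
  have hsmall : ∀ᶠ r in 𝓝[>] (0 : ℝ), r ∈ Ioo (0 : ℝ) (δ / 4) := Ioo_mem_nhdsGT (by positivity)
  obtain ⟨r, hr, hr0, hrδ⟩ := ((hlim.eventually (lt_mem_nhds hhalf)).and hsmall).exists
  have hvol : volume (closedBall z₀ r) = ENNReal.ofReal ((2 * r) ^ n) := by
    simpa using Real.volume_pi_closedBall z₀ hr0.le
  have hA' : ENNReal.ofReal (1 / 2 * (2 * r) ^ n) ≤ volume (A ∩ closedBall z₀ r) := by
    have h := (ENNReal.le_div_iff_mul_le
      (Or.inl (by rw [hvol]; simpa using pow_pos (by linarith) n))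
      (Or.inl (by rw [hvol]; exact ENNReal.ofReal_ne_top))).1 hr.le
    rwa [hvol, ← ENNReal.ofReal_mul (by positivity)] at h
  have hne : (A ∩ closedBall z₀ r).Nonempty := by
    by_contra h
    rw [not_nonempty_iff_eq_empty.1 h, measure_empty, nonpos_iff_eq_zero,
      ENNReal.ofReal_eq_zero] at hA'
    exact absurd hA' (not_le.2 (by positivity))
  choose! h hhI hhlow hhfull using fun z (hz : z ∈ A) => hz
  have hbdd : BddAbove (h '' (A ∩ closedBall z₀ r)) :=
    ⟨p + δ / 2, by rintro _ ⟨z, hz, rfl⟩; exact (hhI z hz.1).2⟩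
  obtain ⟨_, ⟨z, ⟨hzA, hzr⟩, rfl⟩, hzsup⟩ := exists_lt_of_lt_csSup (hne.image h)
    (show sSup (h '' (A ∩ closedBall z₀ r)) - r < sSup (h '' (A ∩ closedBall z₀ r)) by linarith)
  have hmax : ∀ y ∈ A ∩ closedBall z₀ r, h y < h z + r := fun y hy => by
    have := le_csSup hbdd (mem_image_of_mem h hy)
    linarith
  set x : Fin (n + 1) → ℝ := j.insertNth (σ * h z) z with hx
  set W : Set ℝ := (fun t => σ * t) ⁻¹' Ioo (σ * σ * (h z + r)) (σ * σ * (h z + 2 * r)) with hW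
  have hσσ : σ * σ = 1 := by rw [← abs_mul_abs_self, hσ, one_mul]
  have hWvol : volume W = ENNReal.ofReal r := by
    rw [hW, Real.volume_preimage_mul_left hσ0, abs_inv, hσ, hσσ, Real.volume_Ioo,
      inv_one, ENNReal.ofReal_one, one_mul]
    congr 1; ring
  have hsub : {y : Fin (n + 1) → ℝ | y j ∈ W ∧ j.removeNth y ∈ A ∩ closedBall z₀ r} ⊆
      (closedBall x (2 * r) ∩ E) ∪ (zeroDensity Eᶜ \ E) := by
    rintro y ⟨hyW, hyA⟩
    rw [hW, mem_preimage, hσσ, one_mul, one_mul] at hyW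
    obtain ⟨u, hu⟩ : ∃ u, y j = σ * u := ⟨σ * y j, by rw [← mul_assoc, hσσ, one_mul]⟩
    rw [hu, ← mul_assoc, hσσ, one_mul] at hyW
    have hy : y = j.insertNth (σ * u) (j.removeNth y) := by
      rw [← hu]; exact (Fin.insertNth_self_removeNth j y).symm
    have hball : y ∈ closedBall x (2 * r) := by
      rw [hy]
      refine closedBall_insertNth_mem j ?_ ?_
      · rw [← mul_sub, abs_mul, hσ, one_mul, abs_le]
        constructor <;> linarith [hyW.1, hyW.2]
      · have h1 := mem_closedBall.1 hyA.2
        have h2 := mem_closedBall'.1 hzr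
        linarith [dist_triangle (j.removeNth y) z₀ z]
    have hfull : y ∈ zeroDensity Eᶜ := by
      have h1 := hmax _ hyA
      have h2 := (hhI _ hyA.1).1
      have h3 := (hhI z hzA).2
      have := hhfull _ hyA.1 (u - h (j.removeNth y)) ⟨by linarith [hyW.1], by linarith [hyW.2]⟩
      rwa [add_sub_cancel, ← hy] at this
    by_cases hyE : y ∈ E
    · exact Or.inl ⟨hball, hyE⟩
    · exact Or.inr ⟨hfull, hyE⟩
  have hlow := hhlow z hzA (2 * r) ⟨by linarith, by linarith⟩
  have hle : ENNReal.ofReal (r * (1 / 2 * (2 * r) ^ n)) ≤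
      ENNReal.ofReal (1 / 16 * (1 / 2) ^ (n + 1) * (2 * r) ^ (n + 1)) := by
    calc ENNReal.ofReal (r * (1 / 2 * (2 * r) ^ n))
        ≤ volume W * volume (A ∩ closedBall z₀ r) := by
          rw [hWvol, ENNReal.ofReal_mul hr0.le]; gcongr
      _ = volume {y : Fin (n + 1) → ℝ | y j ∈ W ∧ j.removeNth y ∈ A ∩ closedBall z₀ r} :=
          (volume_setOf_mem_and_removeNth_mem j W _).symm
      _ ≤ volume (closedBall x (2 * r) ∩ E) + volume (zeroDensity Eᶜ \ E) :=
          (measure_mono hsub).trans (measure_union_le _ _)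
      _ ≤ _ := by rw [volume_zeroDensity_compl_diff hE, add_zero]; exact hlow
  rw [ENNReal.ofReal_le_ofReal_iff (by positivity), mul_assoc (1 / 16), ← mul_pow,
    show 1 / 2 * (2 * r) = r by ring, mul_pow, pow_succ] at hle
  have h2n : (1 : ℝ) ≤ 2 ^ n := one_le_pow₀ (by norm_num)
  have hrn : 0 < r ^ n * r := by positivity
  nlinarith

/-- Almost no line in the `j`-th direction contains a point of density zero at which a segment of
points of full density starts. -/
theorem volume_jump_eq_zero {n : ℕ} {E : Set (Fin (n + 1) → ℝ)} (hE : MeasurableSet E)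
    (j : Fin (n + 1)) {σ : ℝ} (hσ : |σ| = 1) :
    volume {z : Fin n → ℝ | ∃ u, (j.insertNth (σ * u) z : Fin (n + 1) → ℝ) ∈ zeroDensity E ∧
      ∃ s > 0, ∀ τ ∈ Ioo (0 : ℝ) s,
        (j.insertNth (σ * (u + τ)) z : Fin (n + 1) → ℝ) ∈ zeroDensity Eᶜ} = 0 := by
  refine measure_mono_null ?_ (measure_iUnion_null fun k : ℕ => measure_iUnion_null fun i : ℤ =>
    volume_uniform_jump_eq_zero hE j hσ k (i * (1 / (k + 1) / 2)))
  rintro z ⟨u, hu, s, hs, hfull⟩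
  obtain ⟨k₁, hk₁⟩ := mem_iUnion.1 (zeroDensity_subset_iUnion_lowDensity E hu)
  obtain ⟨k₂, hk₂⟩ := exists_nat_one_div_lt hs
  set k := max k₁ k₂ with hk
  have hkk : (1 : ℝ) / (k + 1) ≤ 1 / (k₂ + 1) :=
    one_div_le_one_div_of_le (by positivity) (by gcongr; exact le_max_right _ _)
  have hδ : (0 : ℝ) < 1 / (k + 1) / 2 := by positivity
  refine mem_iUnion.2 ⟨k, mem_iUnion.2 ⟨⌊u / (1 / (k + 1) / 2)⌋, u, ⟨?_, ?_⟩,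
    lowDensity_mono (le_max_left _ _) E hk₁, fun τ hτ => hfull τ ⟨hτ.1, by linarith [hτ.2]⟩⟩⟩
  · exact (le_div_iff₀ hδ).1 (Int.floor_le _)
  · have := (div_lt_iff₀ hδ).1 (Int.lt_floor_add_one (u / (1 / (k + 1) / 2)))
    linarith

/-- For almost every line in the `j`-th direction, a segment of the line containing only points of
density zero or one consists of points of the same kind, and this is the density zero kind if one
of the endpoints has density zero. -/
theorem exists_null_forall_segment {n : ℕ} {E : Set (Fin (n + 1) → ℝ)} (hE : MeasurableSet E)
    (j : Fin (n + 1)) : ∃ N : Set (Fin n → ℝ), volume N = 0 ∧ ∀ z ∉ N, ∀ α β : ℝ, α < β →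
      (∀ t ∈ Ioo α β,
        (j.insertNth t z : Fin (n + 1) → ℝ) ∈ zeroDensity E ∪ zeroDensity Eᶜ) →
      ((∀ t ∈ Ioo α β, (j.insertNth t z : Fin (n + 1) → ℝ) ∈ zeroDensity E) ∨
        (∀ t ∈ Ioo α β, (j.insertNth t z : Fin (n + 1) → ℝ) ∈ zeroDensity Eᶜ)) ∧
      ((j.insertNth α z : Fin (n + 1) → ℝ) ∈ zeroDensity E ∨
        (j.insertNth β z : Fin (n + 1) → ℝ) ∈ zeroDensity E →
        ∀ t ∈ Ioo α β, (j.insertNth t z : Fin (n + 1) → ℝ) ∈ zeroDensity E) := by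
  set G : Set (Fin (n + 1) → ℝ) → ℝ → Set (Fin n → ℝ) := fun E σ => {z : Fin n → ℝ |
    ∃ u, (j.insertNth (σ * u) z : Fin (n + 1) → ℝ) ∈ zeroDensity E ∧ ∃ s > 0,
      ∀ τ ∈ Ioo (0 : ℝ) s, (j.insertNth (σ * (u + τ)) z : Fin (n + 1) → ℝ) ∈ zeroDensity Eᶜ} with hG
  have hright : ∀ (F : Set (Fin (n + 1) → ℝ)) (z : Fin n → ℝ), z ∉ G F 1 → ∀ t,
      (j.insertNth t z : Fin (n + 1) → ℝ) ∈ zeroDensity F → ∀ s > t,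
      ¬ ∀ τ ∈ Ioo t s, (j.insertNth τ z : Fin (n + 1) → ℝ) ∈ zeroDensity Fᶜ := by
    intro F z hz t ht s hs hall
    refine hz ⟨t, by simpa using ht, s - t, sub_pos.2 hs, fun τ hτ => ?_⟩
    rw [one_mul]
    exact hall _ ⟨by linarith [hτ.1], by linarith [hτ.2]⟩
  have hleft : ∀ (F : Set (Fin (n + 1) → ℝ)) (z : Fin n → ℝ), z ∉ G F (-1) → ∀ t,
      (j.insertNth t z : Fin (n + 1) → ℝ) ∈ zeroDensity F → ∀ s < t,
      ¬ ∀ τ ∈ Ioo s t, (j.insertNth τ z : Fin (n + 1) → ℝ) ∈ zeroDensity Fᶜ := by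
    intro F z hz t ht s hs hall
    refine hz ⟨-t, by simpa using ht, t - s, sub_pos.2 hs, fun τ hτ => ?_⟩
    exact hall _ ⟨by linarith [hτ.2], by linarith [hτ.1]⟩
  refine ⟨(G E 1 ∪ G E (-1)) ∪ (G Eᶜ 1 ∪ G Eᶜ (-1)), ?_, ?_⟩
  · have h1 : |(1 : ℝ)| = 1 := abs_one
    have h2 : |(-1 : ℝ)| = 1 := by simp
    exact measure_union_null
      (measure_union_null (volume_jump_eq_zero hE j h1) (volume_jump_eq_zero hE j h2))
      (measure_union_null (volume_jump_eq_zero hE.compl j h1) (volume_jump_eq_zero hE.compl j h2))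
  intro z hz α β hαβ hall
  simp only [mem_union, not_or] at hz
  obtain ⟨⟨hz1, hz2⟩, hz3, hz4⟩ := hz
  have r1 := hright E z hz1
  have l1 := hleft E z hz2
  have r2 := hright Eᶜ z hz3
  have l2 := hleft Eᶜ z hz4
  rw [compl_compl] at r2 l2
  have hcont : Continuous fun t : ℝ => (j.insertNth t z : Fin (n + 1) → ℝ) :=
    Continuous.finInsertNth (A := fun _ : Fin (n + 1) => ℝ) j continuous_id continuous_const
  have hdich := Ioo_subset_or_subset_of_no_jump (α := α) (β := β)
    (A := Ioo α β ∩ {t | (j.insertNth t z : Fin (n + 1) → ℝ) ∈ zeroDensity E})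
    (B := Ioo α β ∩ {t | (j.insertNth t z : Fin (n + 1) → ℝ) ∈ zeroDensity Eᶜ})
    (fun t ht => (hall t ht).imp (fun h => ⟨ht, h⟩) (fun h => ⟨ht, h⟩))
    (Set.disjoint_left.2 fun t h1 h2 =>
      Set.disjoint_left.1 (disjoint_zeroDensity_compl hE) h1.2 h2.2)
    (fun k => {t | (j.insertNth t z : Fin (n + 1) → ℝ) ∈ closure (lowDensity k E)})
    (fun k => {t | (j.insertNth t z : Fin (n + 1) → ℝ) ∈ closure (lowDensity k Eᶜ)})
    (fun k => isClosed_closure.preimage hcont) (fun k => isClosed_closure.preimage hcont)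
    (fun k t ht => ⟨ht.1, (hall t ht.1).resolve_right
      (Set.disjoint_left.1 (disjoint_closure_lowDensity_zeroDensity_compl k hE) ht.2)⟩)
    (fun k t ht => ⟨ht.1, (hall t ht.1).resolve_left fun h =>
      Set.disjoint_left.1 (disjoint_closure_lowDensity_zeroDensity_compl k hE.compl) ht.2
        (by rwa [compl_compl])⟩)
    (fun t ht => by
      obtain ⟨k, hk⟩ := mem_iUnion.1 (zeroDensity_subset_iUnion_lowDensity E ht.2)
      exact mem_iUnion.2 ⟨k, subset_closure hk⟩)
    (fun t ht => by
      obtain ⟨k, hk⟩ := mem_iUnion.1 (zeroDensity_subset_iUnion_lowDensity Eᶜ ht.2)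
      exact mem_iUnion.2 ⟨k, subset_closure hk⟩)
    (fun t ht s hs _ h => r1 t ht.2 s hs fun τ hτ => (h hτ).2)
    (fun t ht s hs _ h => l1 t ht.2 s hs fun τ hτ => (h hτ).2)
    (fun t ht s hs _ h => r2 t ht.2 s hs fun τ hτ => (h hτ).2)
    (fun t ht s hs _ h => l2 t ht.2 s hs fun τ hτ => (h hτ).2)
  have hdich' : (∀ t ∈ Ioo α β, (j.insertNth t z : Fin (n + 1) → ℝ) ∈ zeroDensity E) ∨
      (∀ t ∈ Ioo α β, (j.insertNth t z : Fin (n + 1) → ℝ) ∈ zeroDensity Eᶜ) :=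
    hdich.imp (fun h t ht => (h ht).2) (fun h t ht => (h ht).2)
  refine ⟨hdich', fun hend => hdich'.resolve_right fun hfull => ?_⟩
  exact hend.elim (fun h => r1 α h β hαβ hfull) (fun h => l1 β h α hαβ hfull)
/-- The open axis-parallel cube with lower corner `a` and side length `l`. -/
def openCube {m : ℕ} (a : Fin m → ℝ) (l : ℝ) : Set (Fin m → ℝ) :=
  univ.pi fun i => Ioo (a i) (a i + l)

theorem measurableSet_openCube {m : ℕ} (a : Fin m → ℝ) (l : ℝ) : MeasurableSet (openCube a l) :=
  MeasurableSet.univ_pi fun _ => measurableSet_Ioo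

theorem mem_openCube_iff_removeNth {n : ℕ} (j : Fin (n + 1)) {a x : Fin (n + 1) → ℝ} {l : ℝ} :
    x ∈ openCube a l ↔
      x j ∈ Ioo (a j) (a j + l) ∧ j.removeNth x ∈ openCube (j.removeNth a) l := by
  simp only [openCube, mem_univ_pi, j.forall_iff_succAbove]
  rfl

/-- The uniform probability measure on an open cube. -/
def cubeProb {m : ℕ} (a : Fin m → ℝ) (l : ℝ) : Measure (Fin m → ℝ) :=
  Measure.pi fun i => ProbabilityTheory.cond volume (Ioo (a i) (a i + l))

theorem isProbabilityMeasure_cond_Ioo (c : ℝ) {l : ℝ} (hl : 0 < l) :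
    IsProbabilityMeasure (ProbabilityTheory.cond volume (Ioo c (c + l))) :=
  ProbabilityTheory.cond_isProbabilityMeasure_of_finite (by simpa using hl) (by simp)

theorem isProbabilityMeasure_cubeProb {m : ℕ} (a : Fin m → ℝ) {l : ℝ} (hl : 0 < l) :
    IsProbabilityMeasure (cubeProb a l) := by
  have := fun i => isProbabilityMeasure_cond_Ioo (a i) hl
  unfold cubeProb
  infer_instance

theorem cubeProb_eq {m : ℕ} (a : Fin m → ℝ) (l : ℝ) :
    cubeProb a l = (ENNReal.ofReal l ^ m)⁻¹ • volume.restrict (openCube a l) := by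
  refine Measure.pi_eq fun s hs => ?_
  rw [Measure.smul_apply, Measure.restrict_apply (MeasurableSet.univ_pi hs), openCube,
    ← pi_inter_distrib, volume_pi_pi, smul_eq_mul]
  simp only [ProbabilityTheory.cond_apply measurableSet_Ioo, Real.volume_Ioo, add_sub_cancel_left,
    Finset.prod_mul_distrib, Finset.prod_const, Finset.card_univ, Fintype.card_fin,
    ENNReal.inv_pow, inter_comm]

theorem cubeProb_apply {m : ℕ} (a : Fin m → ℝ) (l : ℝ) (A : Set (Fin m → ℝ)) :
    cubeProb a l A = (ENNReal.ofReal l ^ m)⁻¹ * volume (A ∩ openCube a l) := by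
  rw [cubeProb_eq a l, Measure.smul_apply, Measure.restrict_apply' (measurableSet_openCube a l),
    smul_eq_mul]

theorem cubeProb_cylinder {n : ℕ} (a : Fin (n + 1) → ℝ) {l : ℝ} (hl : 0 < l) (j : Fin (n + 1))
    (Z : Set (Fin n → ℝ)) : cubeProb a l {x | j.removeNth x ∈ Z} =
      (ENNReal.ofReal l ^ n)⁻¹ * volume (Z ∩ openCube (j.removeNth a) l) := by
  have hset : {x : Fin (n + 1) → ℝ | j.removeNth x ∈ Z} ∩ openCube a l =
      {x : Fin (n + 1) → ℝ | x j ∈ Ioo (a j) (a j + l) ∧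
        j.removeNth x ∈ Z ∩ openCube (j.removeNth a) l} := by
    ext x
    simp only [mem_inter_iff, mem_ofPred_eq, mem_openCube_iff_removeNth j]
    tauto
  have hl0 : ENNReal.ofReal l ≠ 0 := by simpa using hl
  rw [cubeProb_apply a l, hset, volume_setOf_mem_and_removeNth_mem, Real.volume_Ioo,
    add_sub_cancel_left, ← mul_assoc, pow_succ, ENNReal.mul_inv (by simp [hl0]) (by simp [hl0]),
    mul_assoc (_⁻¹), ENNReal.inv_mul_cancel hl0 ENNReal.ofReal_ne_top, mul_one]

theorem measurable_removeNth {n : ℕ} (j : Fin (n + 1)) :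
    Measurable fun x : Fin (n + 1) → ℝ => j.removeNth x :=
  measurable_pi_lambda _ fun i => measurable_pi_apply (j.succAbove i)

/-- The sets `M j` are measurable, their measure is controlled by `b`, and every segment of the
cube in the `j`-th direction over a point outside `M j` consists either of points of density zero
or of points of full density, the former if one of its endpoints has density zero. -/
structure IsJumpCover {n : ℕ} (E : Set (Fin (n + 1) → ℝ)) (a : Fin (n + 1) → ℝ) (l : ℝ)
    (b : ℝ≥0∞) (M : Fin (n + 1) → Set (Fin n → ℝ)) : Prop where
  measurableSet : ∀ j, MeasurableSet (M j)
  volume_le : ∀ j, volume (M j) ≤ b * ENNReal.ofReal l ^ n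
  segment : ∀ j, ∀ z ∈ openCube (j.removeNth a) l, z ∉ M j →
    (∀ t ∈ Ioo (a j) (a j + l), (j.insertNth t z : Fin (n + 1) → ℝ) ∈ zeroDensity E) ∨
      (∀ t ∈ Ioo (a j) (a j + l), (j.insertNth t z : Fin (n + 1) → ℝ) ∈ zeroDensity Eᶜ)
  endpoint : ∀ j, ∀ z ∈ openCube (j.removeNth a) l, z ∉ M j → ∀ c, c = a j ∨ c = a j + l →
    (j.insertNth c z : Fin (n + 1) → ℝ) ∈ zeroDensity E →
    ∀ t ∈ Ioo (a j) (a j + l), (j.insertNth t z : Fin (n + 1) → ℝ) ∈ zeroDensity E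

theorem exists_isJumpCover {n : ℕ} {E : Set (Fin (n + 1) → ℝ)} (hE : MeasurableSet E)
    (a : Fin (n + 1) → ℝ) {l : ℝ} (hl : 0 < l) {b : ℝ≥0∞}
    (hb : ∀ j : Fin (n + 1), volume ((fun x => j.removeNth x) ''
      (openCube a l \ (zeroDensity E ∪ zeroDensity Eᶜ))) ≤ b * ENNReal.ofReal l ^ n) :
    ∃ M, IsJumpCover E a l b M := by
  choose N hN hNline using exists_null_forall_segment hE
  set S := openCube a l \ (zeroDensity E ∪ zeroDensity Eᶜ) with hS
  set M : Fin (n + 1) → Set (Fin n → ℝ) := fun j =>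
    toMeasurable volume (((fun x => j.removeNth x) '' S) ∪ N j) with hM
  have key : ∀ j, ∀ z ∈ openCube (j.removeNth a) l, z ∉ M j → z ∉ N j ∧
      ∀ t ∈ Ioo (a j) (a j + l),
        (j.insertNth t z : Fin (n + 1) → ℝ) ∈ zeroDensity E ∪ zeroDensity Eᶜ := by
    intro j z hz hzM
    have hzM' := fun h => hzM (subset_toMeasurable volume _ h)
    refine ⟨fun h => hzM' (Or.inr h), fun t ht => ?_⟩
    by_contra hcon
    refine hzM' (Or.inl ⟨j.insertNth t z, ⟨(mem_openCube_iff_removeNth j).2 ?_, hcon⟩, ?_⟩)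
    · rw [Fin.insertNth_apply_same, Fin.removeNth_insertNth]
      exact ⟨ht, hz⟩
    · exact Fin.removeNth_insertNth (α := fun _ => ℝ) j t z
  have hlt : ∀ j, a j < a j + l := fun j => by linarith
  refine ⟨M, fun j => measurableSet_toMeasurable _ _, fun j => ?_, fun j z hz hzM => ?_,
    fun j z hz hzM c hc hcE => ?_⟩
  · rw [hM, measure_toMeasurable]
    refine (measure_union_le _ _).trans ?_
    rw [hN, add_zero]
    exact hb j
  · exact (hNline j z (key j z hz hzM).1 _ _ (hlt j) (key j z hz hzM).2).1
  · refine (hNline j z (key j z hz hzM).1 _ _ (hlt j) (key j z hz hzM).2).2 ?_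
    rcases hc with rfl | rfl
    · exact Or.inl hcE
    · exact Or.inr hcE

namespace IsJumpCover

variable {n : ℕ} {E : Set (Fin (n + 1) → ℝ)} {a : Fin (n + 1) → ℝ} {l : ℝ} {b : ℝ≥0∞}
  {M : Fin (n + 1) → Set (Fin n → ℝ)}

theorem cubeProb_cylinder_le (h : IsJumpCover E a l b M) (hl : 0 < l) (j : Fin (n + 1)) :
    cubeProb a l {x | j.removeNth x ∈ M j} ≤ b := by
  have hl0 : ENNReal.ofReal l ≠ 0 := by simpa using hl
  rw [cubeProb_cylinder a hl, mul_comm, ← div_eq_mul_inv]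
  exact ENNReal.div_le_of_le_mul ((measure_mono inter_subset_left).trans (h.volume_le j))

theorem cubeProb_mul_cubeProb_le (h : IsJumpCover E a l b M) (hE : MeasurableSet E) (hl : 0 < l)
    {A B : Set (Fin (n + 1) → ℝ)} (hA : A ⊆ openCube a l ∩ zeroDensity E)
    (hB : B ⊆ openCube a l ∩ zeroDensity Eᶜ) :
    cubeProb a l A * cubeProb a l B ≤ (n + 1) * b := by
  have := fun i => isProbabilityMeasure_cond_Ioo (a i) hl
  have hdisj := Set.disjoint_left.1 (disjoint_zeroDensity_compl hE)
  rw [mul_comm]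
  refine (measure_mul_measure_le_sum _ (fun i => Ioo (a i) (a i + l)) (· ∈ zeroDensity Eᶜ)
    (fun j => {x | j.removeNth x ∈ M j})
    (fun j => measurable_removeNth j (h.measurableSet j)) ?_ B A hB
    (fun x hx => ⟨(hA hx).1, hdisj (hA hx).2⟩)).trans ?_
  · intro k x t hx ht hxM hxE
    have hx' := (mem_openCube_iff_removeNth k).1 hx
    rw [← Fin.insertNth_removeNth]
    refine (h.segment k _ hx'.2 hxM).resolve_left (fun hcon => ?_) t ht
    have := hcon _ hx'.1
    rw [Fin.insertNth_self_removeNth] at this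
    exact hdisj this hxE
  · calc _ ≤ ∑ _k : Fin (n + 1), b := Finset.sum_le_sum fun k _ => h.cubeProb_cylinder_le hl k
      _ = (n + 1) * b := by simp

theorem cubeProb_le_inter_zeroDensity_compl (hE : MeasurableSet E) :
    cubeProb a l E ≤ cubeProb a l (openCube a l ∩ zeroDensity Eᶜ) := by
  rw [cubeProb_apply a l, cubeProb_apply a l]
  gcongr 1
  refine measure_mono_ae ?_
  filter_upwards [ae_mem_zeroDensity_compl hE] with x hx hxE
  exact ⟨⟨hxE.2, hx hxE.1⟩, hxE.2⟩

theorem volume_face_mul_le (h : IsJumpCover E a l b M) (hE : MeasurableSet E) (hl : 0 < l)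
    (j : Fin (n + 1)) {c : ℝ} (hc : c = a j ∨ c = a j + l) :
    volume {z : Fin n → ℝ | z ∈ Icc (j.removeNth a) (j.removeNth a + fun _ => l) ∧
      (j.insertNth c z : Fin (n + 1) → ℝ) ∈ zeroDensity E} * cubeProb a l E ≤
      (n + 2) * b * ENNReal.ofReal l ^ n := by
  have hl0 : ENNReal.ofReal l ≠ 0 := by simpa using hl
  have := isProbabilityMeasure_cubeProb a hl
  set Z : Set (Fin n → ℝ) := {z | z ∈ openCube (j.removeNth a) l ∧ z ∉ M j ∧
    (j.insertNth c z : Fin (n + 1) → ℝ) ∈ zeroDensity E} with hZ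
  have hZle : volume Z * cubeProb a l E ≤ (n + 1) * b * ENNReal.ofReal l ^ n := by
    have h1 := h.cubeProb_mul_cubeProb_le hE hl
      (A := {x : Fin (n + 1) → ℝ | j.removeNth x ∈ Z} ∩ openCube a l)
      (B := openCube a l ∩ zeroDensity Eᶜ) (fun x hx => ⟨hx.2, by
        have := h.endpoint j _ hx.1.1 hx.1.2.1 c hc hx.1.2.2 (x j)
          ((mem_openCube_iff_removeNth j).1 hx.2).1
        rwa [Fin.insertNth_self_removeNth] at this⟩) Subset.rfl
    have h2 : cubeProb a l ({x : Fin (n + 1) → ℝ | j.removeNth x ∈ Z} ∩ openCube a l) =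
        (ENNReal.ofReal l ^ n)⁻¹ * volume Z := by
      have h3 : Z ∩ openCube (j.removeNth a) l = Z := inter_eq_left.2 fun z hz => hz.1
      rw [← h3, ← cubeProb_cylinder a hl j, cubeProb_apply a l, cubeProb_apply a l, inter_assoc,
        inter_self, h3]
    rw [h2] at h1
    calc volume Z * cubeProb a l E
        ≤ volume Z * cubeProb a l (openCube a l ∩ zeroDensity Eᶜ) := by
          exact mul_le_mul' le_rfl (cubeProb_le_inter_zeroDensity_compl hE)
      _ = ((ENNReal.ofReal l ^ n)⁻¹ * volume Z * cubeProb a l (openCube a l ∩ zeroDensity Eᶜ)) *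
          ENNReal.ofReal l ^ n := by
          rw [mul_right_comm, mul_right_comm _ (volume Z),
            ENNReal.inv_mul_cancel (by simp [hl0]) (by simp), one_mul]
      _ ≤ _ := by gcongr
  have hbox : (openCube (j.removeNth a) l : Set (Fin n → ℝ)) =ᵐ[volume]
      Icc (j.removeNth a) (j.removeNth a + fun _ => l) :=
    Measure.univ_pi_Ioo_ae_eq_Icc (μ := fun _ : Fin n => (volume : Measure ℝ))
  have hface : volume {z : Fin n → ℝ | z ∈ Icc (j.removeNth a) (j.removeNth a + fun _ => l) ∧
      (j.insertNth c z : Fin (n + 1) → ℝ) ∈ zeroDensity E} ≤ volume Z + volume (M j) := by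
    refine le_trans (measure_mono_ae (t := Z ∪ M j) ?_) (measure_union_le _ _)
    filter_upwards [hbox.mem_iff] with z hz hzF
    by_cases hzM : z ∈ M j
    · exact Or.inr hzM
    · exact Or.inl ⟨hz.2 hzF.1, hzM, hzF.2⟩
  calc _ ≤ (volume Z + volume (M j)) * cubeProb a l E := by gcongr
    _ = volume Z * cubeProb a l E + volume (M j) * cubeProb a l E := add_mul _ _ _
    _ ≤ (n + 1) * b * ENNReal.ofReal l ^ n + b * ENNReal.ofReal l ^ n * 1 := by
        gcongr
        · exact h.volume_le j
        · exact prob_le_one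
    _ = (n + 2) * b * ENNReal.ofReal l ^ n := by ring

theorem half_le_cubeProb_zeroDensity (hE : MeasurableSet E) (hl : 0 < l)
    (hhalf : cubeProb a l E ≤ 1 / 2) :
    1 / 2 ≤ cubeProb a l (openCube a l ∩ zeroDensity E) := by
  have := isProbabilityMeasure_cubeProb a hl
  have h1 : cubeProb a l Eᶜ ≤ cubeProb a l (openCube a l ∩ zeroDensity E) := by
    simpa using cubeProb_le_inter_zeroDensity_compl (a := a) hE.compl
  refine le_trans ?_ h1
  rw [prob_compl_eq_one_sub hE]
  calc (1 / 2 : ℝ≥0∞) = 1 - 1 / 2 := by simp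
    _ ≤ _ := by gcongr

theorem cubeProb_le_of_le_half (h : IsJumpCover E a l b M) (hE : MeasurableSet E) (hl : 0 < l)
    (hhalf : cubeProb a l E ≤ 1 / 2) {A : Set (Fin (n + 1) → ℝ)}
    (hA : A ⊆ openCube a l ∩ zeroDensity Eᶜ) : cubeProb a l A ≤ 2 * (n + 1) * b := by
  have h1 := h.cubeProb_mul_cubeProb_le hE hl Subset.rfl hA
  calc cubeProb a l A = 2 * (1 / 2 * cubeProb a l A) := by
        rw [← mul_assoc, ENNReal.mul_div_cancel (by simp) (by simp), one_mul]
    _ ≤ 2 * (cubeProb a l (openCube a l ∩ zeroDensity E) * cubeProb a l A) := by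
        gcongr; exact half_le_cubeProb_zeroDensity hE hl hhalf
    _ ≤ 2 * ((n + 1) * b) := by gcongr
    _ = _ := by ring

theorem cubeProb_le_rpow (h : IsJumpCover E a l b M) (hE : MeasurableSet E) (hl : 0 < l)
    (hhalf : cubeProb a l E ≤ 1 / 2) {p : ℝ} (hp : Real.HolderConjugate ((n : ℝ) + 1) p) :
    cubeProb a l E ≤ ((n + 1) * (2 * n + 3) * b) ^ p := by
  have := fun i => isProbabilityMeasure_cond_Ioo (a i) hl
  have hdisj := Set.disjoint_left.1 (disjoint_zeroDensity_compl hE)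
  set Y : Fin (n + 1) → Set (Fin n → ℝ) := fun j =>
    {z | z ∈ openCube (j.removeNth a) l ∧ ∀ t ∈ Ioo (a j) (a j + l),
      (j.insertNth t z : Fin (n + 1) → ℝ) ∈ zeroDensity Eᶜ} with hY
  set V : Fin (n + 1) → Set (Fin n → ℝ) := fun j => toMeasurable volume (Y j) ∪ M j with hV
  have hVm : ∀ j, MeasurableSet (V j) := fun j =>
    (measurableSet_toMeasurable volume (Y j)).union (h.measurableSet j)
  have hYle : ∀ j, cubeProb a l {x | j.removeNth x ∈ toMeasurable volume (Y j)} ≤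
      2 * (n + 1) * b := fun j => by
    refine le_trans ?_ (h.cubeProb_le_of_le_half hE hl hhalf
      (A := {x : Fin (n + 1) → ℝ | j.removeNth x ∈ Y j} ∩ openCube a l) fun x hx => ⟨hx.2, ?_⟩)
    · have h3 : Y j ∩ openCube (j.removeNth a) l = Y j := inter_eq_left.2 fun z hz => hz.1
      have h4 : cubeProb a l ({x : Fin (n + 1) → ℝ | j.removeNth x ∈ Y j} ∩ openCube a l) =
          (ENNReal.ofReal l ^ n)⁻¹ * volume (Y j) := by
        rw [← h3, ← cubeProb_cylinder a hl j, cubeProb_apply a l, cubeProb_apply a l, inter_assoc,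
          inter_self, h3]
      rw [h4, cubeProb_cylinder a hl]
      gcongr 1
      exact (measure_mono inter_subset_left).trans (measure_toMeasurable (Y j)).le
    · have := hx.1.2 (x j) ((mem_openCube_iff_removeNth j).1 hx.2).1
      rwa [Fin.insertNth_self_removeNth] at this
  have hK : ∀ j, cubeProb a l {x | j.removeNth x ∈ V j} ≤ (2 * n + 3) * b := fun j => by
    have hsub : {x : Fin (n + 1) → ℝ | j.removeNth x ∈ V j} =
      {x : Fin (n + 1) → ℝ | j.removeNth x ∈ toMeasurable volume (Y j)} ∪
        {x : Fin (n + 1) → ℝ | j.removeNth x ∈ M j} := rfl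
    rw [hsub]
    calc _ ≤ 2 * (n + 1) * b + b :=
          (measure_union_le _ _).trans (add_le_add (hYle j) (h.cubeProb_cylinder_le hl j))
      _ = _ := by ring
  refine (cubeProb_le_inter_zeroDensity_compl hE).trans ?_
  refine (measure_le_sum_rpow_of_cylinders _ (p := p) (by simpa using hp)
    (fun j => {x : Fin (n + 1) → ℝ | j.removeNth x ∈ V j})
    (fun j => measurable_removeNth j (hVm j)) ?_ _ ?_).trans ?_
  · intro j x t hx
    simp only [mem_ofPred_eq] at hx ⊢
    rwa [← Fin.insertNth_removeNth, Fin.removeNth_insertNth (α := fun _ => ℝ)]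
  · intro j x hx
    by_cases hxM : j.removeNth x ∈ M j
    · exact Or.inr hxM
    · have hx' := (mem_openCube_iff_removeNth j).1 hx.1
      refine Or.inl (subset_toMeasurable _ _ ⟨hx'.2, ?_⟩)
      refine (h.segment j _ hx'.2 hxM).resolve_left fun hcon => ?_
      have := hcon _ hx'.1
      rw [Fin.insertNth_self_removeNth] at this
      exact hdisj this hx.2
  · refine ENNReal.rpow_le_rpow ?_ hp.symm.nonneg
    calc _ ≤ ∑ _j : Fin (n + 1), (2 * n + 3) * b := Finset.sum_le_sum fun j _ => hK j
      _ = (n + 1) * (2 * n + 3) * b := by simp [mul_assoc]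

end IsJumpCover

theorem mem_zeroDensity_preimage_of_limsup {d : ℕ} {E : Set (Ed d)} {x : Ed d}
    (h : ¬ 0 < Filter.limsup (fun r : ℝ => volume (ball x r ∩ E) / ENNReal.ofReal (r ^ d))
      (𝓝[>] 0)) : x.ofLp ∈ zeroDensity (WithLp.toLp 2 ⁻¹' E) := by
  intro ε hε
  obtain ⟨K, hK⟩ : ∃ K : NNReal, LipschitzWith K (WithLp.toLp 2 : (Fin d → ℝ) → Ed d) :=
    ⟨_, PiLp.lipschitzWith_toLp 2 _⟩
  have hD : (0 : ℝ) < K + 1 := by positivity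
  have hlim : Filter.limsup (fun r : ℝ => volume (ball x r ∩ E) / ENNReal.ofReal (r ^ d)) (𝓝[>] 0) <
      ENNReal.ofReal (ε / (K + 1) ^ d) :=
    (not_lt.1 h).trans_lt (ENNReal.ofReal_pos.2 (by positivity))
  have htend : Tendsto (fun r : ℝ => (K + 1) * r) (𝓝[>] 0) (𝓝[>] 0) := by
    refine tendsto_nhdsWithin_iff.2 ⟨?_, ?_⟩
    · refine Tendsto.mono_left ?_ nhdsWithin_le_nhds
      simpa using (continuous_const_mul ((K : ℝ) + 1)).tendsto 0
    · filter_upwards [self_mem_nhdsWithin] with r hr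
      exact mul_pos hD hr
  filter_upwards [htend.eventually (Filter.eventually_lt_of_limsup_lt hlim), self_mem_nhdsWithin]
    with r hr hr0
  have hr0 : 0 < r := hr0
  have hsub : closedBall x.ofLp r ∩ WithLp.toLp 2 ⁻¹' E ⊆
      WithLp.toLp 2 ⁻¹' (ball x ((K + 1) * r) ∩ E) := fun y hy => by
    refine ⟨mem_ball.2 ?_, hy.2⟩
    calc dist (WithLp.toLp 2 y) x ≤ K * dist y x.ofLp := hK.dist_le_mul y x.ofLp
      _ ≤ K * r := by gcongr; exact mem_closedBall.1 hy.1
      _ < (K + 1) * r := by linarith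
  have hvol : volume (WithLp.toLp 2 ⁻¹' (ball x ((K + 1) * r) ∩ E)) =
      volume (ball x ((K + 1) * r) ∩ E) :=
    MeasurePreserving.measure_preimage_equiv (f := MeasurableEquiv.toLp 2 (Fin d → ℝ))
      (PiLp.volume_preserving_toLp (Fin d)) _
  refine (measure_mono hsub).trans (hvol.le.trans ?_)
  have hpos : 0 < ((K + 1) * r) ^ d := by positivity
  rw [ENNReal.div_lt_iff (Or.inl (by simpa using hpos)) (Or.inl ENNReal.ofReal_ne_top)] at hr
  refine hr.le.trans (le_of_eq ?_)
  rw [← ENNReal.ofReal_mul (by positivity)]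
  congr 1
  rw [mul_pow]
  field_simp

theorem mem_zeroDensity_preimage_of_notMem_mtClosure {d : ℕ} {E : Set (Ed d)} {x : Ed d}
    (h : x ∉ mtClosure E) : x.ofLp ∈ zeroDensity (WithLp.toLp 2 ⁻¹' E) :=
  mem_zeroDensity_preimage_of_limsup h

theorem mem_zeroDensity_preimage_of_notMem_mtBoundary {d : ℕ} {E : Set (Ed d)} {x : Ed d}
    (h : x ∉ mtBoundary E) :
    x.ofLp ∈ zeroDensity (WithLp.toLp 2 ⁻¹' E) ∪ zeroDensity (WithLp.toLp 2 ⁻¹' E)ᶜ := by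
  by_contra hcon
  rw [mem_union, not_or] at hcon
  refine h ⟨?_, ?_⟩
  · by_contra h0
    exact hcon.2 (mem_zeroDensity_preimage_of_limsup (E := Eᶜ) h0)
  · by_contra h0
    exact hcon.1 (mem_zeroDensity_preimage_of_limsup h0)

theorem preimage_openCube_subset_interior {d : ℕ} (a : Fin d → ℝ) (l : ℝ) :
    WithLp.ofLp ⁻¹' openCube a l ⊆ interior {x : Ed d | ∀ i, x i ∈ Icc (a i) (a i + l)} := by
  refine interior_maximal (fun x hx i => Ioo_subset_Icc_self (hx i (mem_univ i))) ?_
  exact (isOpen_set_pi finite_univ fun _ _ => isOpen_Ioo).preimage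
    (PiLp.continuous_ofLp 2 (fun _ : Fin d => ℝ))

theorem frontier_cube_subset {d : ℕ} (a : Fin d → ℝ) (l : ℝ) :
    frontier {x : Ed d | ∀ i, x i ∈ Icc (a i) (a i + l)} ⊆
      {x : Ed d | (∀ i, x i ∈ Icc (a i) (a i + l)) ∧ ∃ j, x j = a j ∨ x j = a j + l} := by
  have hclosed : IsClosed {x : Ed d | ∀ i, x i ∈ Icc (a i) (a i + l)} := by
    have : {x : Ed d | ∀ i, x i ∈ Icc (a i) (a i + l)} =
        WithLp.ofLp ⁻¹' univ.pi fun i => Icc (a i) (a i + l) := by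
      ext x; simp [Pi.le_def, forall_and]
    rw [this]
    exact (isClosed_set_pi fun _ _ => isClosed_Icc).preimage
      (PiLp.continuous_ofLp 2 (fun _ : Fin d => ℝ))
  intro x hx
  rw [hclosed.frontier_eq] at hx
  refine ⟨hx.1, ?_⟩
  by_contra! hcon
  exact hx.2 (preimage_openCube_subset_interior a l fun i _ =>
    ⟨lt_of_le_of_ne (hx.1 i).1 (hcon i).1.symm, lt_of_le_of_ne (hx.1 i).2 (hcon i).2⟩)

theorem hausdorffMeasure_eq_volume (n : ℕ) : (μH[(n : ℝ)] : Measure (Fin n → ℝ)) = volume := by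
  simpa using hausdorffMeasure_pi_real (ι := Fin n)

theorem lipschitzWith_removeNth_ofLp {n : ℕ} (j : Fin (n + 1)) :
    LipschitzWith 1 fun x : Ed (n + 1) => j.removeNth x.ofLp := by
  have h1 : LipschitzWith 1 fun x : Fin (n + 1) → ℝ => j.removeNth x :=
    LipschitzWith.of_dist_le_mul fun x y => by
      rw [NNReal.coe_one, one_mul, dist_pi_le_iff dist_nonneg]
      exact fun i => dist_le_pi_dist x y (j.succAbove i)
  have h2 := h1.comp (PiLp.lipschitzWith_ofLp 2 (fun _ : Fin (n + 1) => ℝ))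
  rwa [one_mul] at h2

theorem volume_image_removeNth_le {n : ℕ} (j : Fin (n + 1)) (S : Set (Ed (n + 1))) :
    volume ((fun x : Ed (n + 1) => j.removeNth x.ofLp) '' S) ≤ μH[(n : ℝ)] S := by
  rw [← hausdorffMeasure_eq_volume]
  simpa using (lipschitzWith_removeNth_ofLp j).hausdorffMeasure_image_le (Nat.cast_nonneg n) S

theorem hausdorffMeasure_image_insertNth_le {n : ℕ} :
    ∃ K : ℝ≥0∞, K ≠ ∞ ∧ ∀ (j : Fin (n + 1)) (c : ℝ) (Z : Set (Fin n → ℝ)),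
      μH[(n : ℝ)] ((fun z => (WithLp.toLp 2 (j.insertNth c z : Fin (n + 1) → ℝ) : Ed (n + 1))) '' Z)
        ≤ K * volume Z := by
  obtain ⟨K, hK⟩ : ∃ K : NNReal, LipschitzWith K (WithLp.toLp 2 : (Fin (n + 1) → ℝ) → Ed (n + 1)) :=
    ⟨_, PiLp.lipschitzWith_toLp 2 _⟩
  refine ⟨(K : ℝ≥0∞) ^ (n : ℝ), by simp, fun j c Z => ?_⟩
  have h1 : LipschitzWith 1 fun z : Fin n → ℝ => (j.insertNth c z : Fin (n + 1) → ℝ) :=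
    LipschitzWith.of_dist_le_mul fun x y => by
      rw [Fin.dist_insertNth_insertNth, dist_self, NNReal.coe_one, one_mul]
      exact max_le dist_nonneg le_rfl
  rw [← hausdorffMeasure_eq_volume]
  simpa using (hK.comp h1).hausdorffMeasure_image_le (Nat.cast_nonneg n) Z

theorem hausdorffMeasure_le_of_subset_frontier {n : ℕ} :
    ∃ K : ℝ≥0∞, K ≠ ∞ ∧ ∀ (a : Fin (n + 1) → ℝ) (l : ℝ) (A : Set (Ed (n + 1)))
      (W : Set (Fin (n + 1) → ℝ)) (t m : ℝ≥0∞), (∀ x ∈ A, x.ofLp ∈ W) →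
      A ⊆ frontier {x : Ed (n + 1) | ∀ i, x i ∈ Icc (a i) (a i + l)} →
      (∀ (j : Fin (n + 1)) (c : ℝ), c = a j ∨ c = a j + l →
        volume {z : Fin n → ℝ | z ∈ Icc (j.removeNth a) (j.removeNth a + fun _ => l) ∧
          (j.insertNth c z : Fin (n + 1) → ℝ) ∈ W} * m ≤ t) →
      μH[(n : ℝ)] A * m ≤ K * t := by
  obtain ⟨K, hKtop, hK⟩ := hausdorffMeasure_image_insertNth_le (n := n)
  refine ⟨(n + 1) * (2 * K), ?_, fun a l A W t m hW hA ht => ?_⟩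
  · exact ENNReal.mul_ne_top (by simp) (ENNReal.mul_ne_top (by simp) hKtop)
  set f : Fin (n + 1) → ℝ → (Fin n → ℝ) → Ed (n + 1) := fun j c z =>
    WithLp.toLp 2 (j.insertNth c z : Fin (n + 1) → ℝ) with hf
  set Z : Fin (n + 1) → ℝ → Set (Fin n → ℝ) := fun j c =>
    {z | z ∈ Icc (j.removeNth a) (j.removeNth a + fun _ => l) ∧
      (j.insertNth c z : Fin (n + 1) → ℝ) ∈ W} with hZ
  have hcover : A ⊆ ⋃ j, (f j (a j) '' Z j (a j) ∪ f j (a j + l) '' Z j (a j + l)) := by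
    intro x hx
    obtain ⟨hxQ, j, hj⟩ := frontier_cube_subset a l (hA hx)
    have hmem : x ∈ f j (x j) '' Z j (x j) := by
      refine ⟨j.removeNth x.ofLp, ⟨⟨fun i => (hxQ _).1, fun i => (hxQ _).2⟩, ?_⟩, ?_⟩
      · rw [Fin.insertNth_self_removeNth]
        exact hW x hx
      · simp only [hf]
        rw [Fin.insertNth_self_removeNth]
    refine mem_iUnion.2 ⟨j, ?_⟩
    rcases hj with hj | hj
    · exact Or.inl (hj ▸ hmem)
    · exact Or.inr (hj ▸ hmem)
  have hface : ∀ j c, c = a j ∨ c = a j + l → μH[(n : ℝ)] (f j c '' Z j c) * m ≤ K * t :=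
    fun j c hc => by
      refine (mul_le_mul_left (hK j c (Z j c)) m).trans ?_
      rw [mul_assoc]
      exact mul_le_mul_right (ht j c hc) K
  calc μH[(n : ℝ)] A * m
      ≤ (∑ j, (μH[(n : ℝ)] (f j (a j) '' Z j (a j)) +
          μH[(n : ℝ)] (f j (a j + l) '' Z j (a j + l)))) * m := by
        gcongr
        refine (measure_mono hcover).trans ((measure_iUnion_fintype_le _ _).trans ?_)
        exact Finset.sum_le_sum fun j _ => measure_union_le _ _
    _ = ∑ j, (μH[(n : ℝ)] (f j (a j) '' Z j (a j)) * m +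
          μH[(n : ℝ)] (f j (a j + l) '' Z j (a j + l)) * m) := by
        simp only [Finset.sum_mul, add_mul]
    _ ≤ ∑ _j : Fin (n + 1), (K * t + K * t) := Finset.sum_le_sum fun j _ =>
        add_le_add (hface j _ (Or.inl rfl)) (hface j _ (Or.inr rfl))
    _ = (n + 1) * (2 * K) * t := by simp; ring

theorem cubeProb_preimage_eq {d : ℕ} {E : Set (Ed d)} (a : Fin d → ℝ) {l : ℝ} (hl : 0 < l)
    {q : ℝ≥0∞} (h : volume (E ∩ {x : Ed d | ∀ i, x i ∈ Icc (a i) (a i + l)}) =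
      q * volume {x : Ed d | ∀ i, x i ∈ Icc (a i) (a i + l)}) :
    cubeProb a l (WithLp.toLp 2 ⁻¹' E) = q := by
  have hpre : ∀ A : Set (Ed d), volume A = volume (WithLp.toLp 2 ⁻¹' A : Set (Fin d → ℝ)) :=
    fun A => (MeasurePreserving.measure_preimage_equiv (f := MeasurableEquiv.toLp 2 (Fin d → ℝ))
      (PiLp.volume_preserving_toLp (Fin d)) A).symm
  have hQ : (WithLp.toLp 2 ⁻¹' {x : Ed d | ∀ i, x i ∈ Icc (a i) (a i + l)} : Set (Fin d → ℝ)) =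
      Icc a (fun i => a i + l) := by
    ext x
    simp [Pi.le_def, forall_and]
  rw [hpre, hpre {x : Ed d | _}, preimage_inter, hQ] at h
  have hae : (openCube a l : Set (Fin d → ℝ)) =ᵐ[volume] Icc a (fun i => a i + l) :=
    Measure.univ_pi_Ioo_ae_eq_Icc
  have hl0 : ENNReal.ofReal l ^ d ≠ 0 := pow_ne_zero _ (by simpa using hl)
  rw [cubeProb_apply a l, measure_congr ((ae_eq_refl _).inter hae), h, Real.volume_Icc_pi]
  simp only [add_sub_cancel_left, Finset.prod_const, Finset.card_univ, Fintype.card_fin]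
  rw [mul_left_comm, ENNReal.inv_mul_cancel hl0 (by simp), mul_one]

/-- Combines the two bounds for the boundary part `H` of a cube with faces of measure `L`. -/
theorem mul_rpow_le_of_bounds {n : ℕ} {K H L b m : ℝ≥0∞} (hm1 : m ≤ 1) (hm0 : m ≠ 0)
    (h1 : H * m ≤ K * ((n + 2) * b * L)) (h2 : H ≤ K * L) (hn0 : n = 0 → b * L = 0 ∨ 1 ≤ b * L)
    (hL : n = 0 → L = 1)
    (h3 : m ≤ 1 / 2 → ∀ p : ℝ, Real.HolderConjugate ((n : ℝ) + 1) p →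
      m ≤ ((n + 1) * (2 * n + 3) * b) ^ p) :
    H * m ^ ((n : ℝ) / (n + 1)) ≤ K * (2 * (n + 2) * (2 * n + 3)) * (b * L) := by
  have hn2 : (1 : ℝ≥0∞) ≤ 2 * (n + 2) * (2 * n + 3) := by
    have : (1 : ℕ) ≤ 2 * (n + 2) * (2 * n + 3) := Nat.one_le_iff_ne_zero.2 (by positivity)
    exact_mod_cast this
  rcases Nat.eq_zero_or_pos n with rfl | hn
  · rw [Nat.cast_zero, zero_div, ENNReal.rpow_zero, mul_one]
    rcases hn0 rfl with h0 | h0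
    · rw [mul_assoc, h0, mul_zero, mul_zero, nonpos_iff_eq_zero, mul_eq_zero] at h1
      rw [h1.resolve_right hm0]
      exact zero_le
    · calc H ≤ K * 1 * 1 := by simpa [hL rfl] using h2
        _ ≤ _ := by gcongr
  have hnR : (0 : ℝ) < n := by exact_mod_cast hn
  by_cases hm : m ≤ 1 / 2
  · have hp : Real.HolderConjugate ((n : ℝ) + 1) (((n : ℝ) + 1) / n) := by
      rw [Real.holderConjugate_iff]
      refine ⟨by linarith, ?_⟩
      field_simp
      ring
    have h4 : m ^ ((n : ℝ) / (n + 1)) ≤ (n + 1) * (2 * n + 3) * b := by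
      calc m ^ ((n : ℝ) / (n + 1))
          ≤ (((n + 1) * (2 * n + 3) * b) ^ (((n : ℝ) + 1) / n)) ^ ((n : ℝ) / (n + 1)) :=
            ENNReal.rpow_le_rpow (h3 hm _ hp) (by positivity)
        _ = _ := by
            rw [← ENNReal.rpow_mul, div_mul_div_comm, mul_comm (n : ℝ), div_self (by positivity),
              ENNReal.rpow_one]
    have h5 : ((n : ℝ≥0∞) + 1) ≤ 2 * (n + 2) := by
      have : n + 1 ≤ 2 * (n + 2) := by omega
      exact_mod_cast this
    calc H * m ^ ((n : ℝ) / (n + 1)) ≤ K * L * ((n + 1) * (2 * n + 3) * b) := by gcongr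
      _ = K * ((n + 1) * (2 * n + 3)) * (b * L) := by ring
      _ ≤ _ := by gcongr
  · have h4 : m ^ ((n : ℝ) / (n + 1)) ≤ 2 * m := by
      calc m ^ ((n : ℝ) / (n + 1)) ≤ 1 := ENNReal.rpow_le_one hm1 (by positivity)
        _ = 2 * (1 / 2) := by rw [ENNReal.mul_div_cancel (by simp) (by simp)]
        _ ≤ 2 * m := by gcongr; exact (not_le.1 hm).le
    have h5 : (1 : ℝ≥0∞) ≤ 2 * n + 3 := by
      have : 1 ≤ 2 * n + 3 := by omega
      exact_mod_cast this
    calc H * m ^ ((n : ℝ) / (n + 1)) ≤ 2 * (H * m) := by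
          rw [mul_left_comm]; gcongr
      _ ≤ 2 * (K * ((n + 2) * b * L)) := by gcongr
      _ = K * (2 * (n + 2) * 1) * (b * L) := by ring
      _ ≤ _ := by gcongr

theorem exists_hausdorffMeasure_frontier_mul_rpow_le (n : ℕ) :
    ∃ C : ℝ≥0∞, C ≠ ∞ ∧ ∀ (E : Set (Ed (n + 1))) (a : Fin (n + 1) → ℝ) (l : ℝ) (q : ℝ≥0∞),
      MeasurableSet E → 0 < l → q ≠ 0 → q ≤ 1 →
      volume (E ∩ {x : Ed (n + 1) | ∀ i, x i ∈ Icc (a i) (a i + l)}) =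
        q * volume {x : Ed (n + 1) | ∀ i, x i ∈ Icc (a i) (a i + l)} →
      μH[(n : ℝ)] (frontier {x : Ed (n + 1) | ∀ i, x i ∈ Icc (a i) (a i + l)} \ mtClosure E) *
        q ^ ((n : ℝ) / (n + 1)) ≤
      C * μH[(n : ℝ)]
        (mtBoundary E ∩ interior {x : Ed (n + 1) | ∀ i, x i ∈ Icc (a i) (a i + l)}) := by
  obtain ⟨K, hKtop, hK⟩ := hausdorffMeasure_le_of_subset_frontier (n := n)
  refine ⟨K * (2 * (n + 2) * (2 * n + 3)), ?_, fun E a l q hE hl hq0 hq1 hvol => ?_⟩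
  · refine ENNReal.mul_ne_top hKtop ?_
    have : (2 * (n + 2) * (2 * n + 3) : ℝ≥0∞) = ((2 * (n + 2) * (2 * n + 3) : ℕ) : ℝ≥0∞) := by
      push_cast; rfl
    rw [this]
    exact ENNReal.natCast_ne_top _
  set Q := {x : Ed (n + 1) | ∀ i, x i ∈ Icc (a i) (a i + l)} with hQ
  set S := mtBoundary E ∩ interior Q with hS
  set F : Set (Fin (n + 1) → ℝ) := WithLp.toLp 2 ⁻¹' E with hF
  have hFm : MeasurableSet F := (MeasurableEquiv.toLp 2 (Fin (n + 1) → ℝ)).measurable hE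
  set L : ℝ≥0∞ := ENNReal.ofReal l ^ n with hL
  have hL0 : L ≠ 0 := pow_ne_zero _ (by simpa using hl)
  have hLtop : L ≠ ∞ := by simp [hL]
  have hbL : μH[(n : ℝ)] S / L * L = μH[(n : ℝ)] S := ENNReal.div_mul_cancel hL0 hLtop
  have hq : cubeProb a l F = q := cubeProb_preimage_eq a hl hvol
  obtain ⟨M, hM⟩ := exists_isJumpCover hFm a hl (b := μH[(n : ℝ)] S / L) fun j => by
    rw [hbL]
    refine (measure_mono ?_).trans (volume_image_removeNth_le j S)
    rintro _ ⟨x, hx, rfl⟩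
    refine ⟨WithLp.toLp 2 x, ⟨?_, preimage_openCube_subset_interior a l hx.1⟩, rfl⟩
    by_contra hcon
    exact hx.2 (mem_zeroDensity_preimage_of_notMem_mtBoundary hcon)
  rw [← hbL]
  refine mul_rpow_le_of_bounds hq1 hq0 ?_ ?_ ?_ ?_ ?_
  · refine hK a l _ (zeroDensity F) _ q
      (fun x hx => mem_zeroDensity_preimage_of_notMem_mtClosure hx.2) sdiff_subset fun j c hc => ?_
    rw [← hq]
    exact hM.volume_face_mul_le hFm hl j hc
  · rw [← mul_one (μH[(n : ℝ)] (frontier Q \ mtClosure E))]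
    refine hK a l _ univ _ 1 (fun x _ => mem_univ _) sdiff_subset fun j c _ => ?_
    rw [mul_one]
    refine (measure_mono fun z hz => hz.1).trans (le_of_eq ?_)
    rw [Real.volume_Icc_pi]
    simp [hL]
  · rintro rfl
    rw [hbL]
    rcases S.eq_empty_or_nonempty with h | ⟨x, hx⟩
    · exact Or.inl (by rw [h, measure_empty])
    · refine Or.inr ?_
      rw [Nat.cast_zero, ← Measure.hausdorffMeasure_zero_singleton x]
      exact measure_mono (singleton_subset_iff.2 hx)
  · rintro rfl
    simp [hL]
  · intro hhalf p hp
    rw [← hq] at hhalf ⊢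
    exact hM.cubeProb_le_rpow hFm hl hhalf hp

/-- If `E` is measurable and `Q` is a cube with `|E ∩ Q| = λ |Q|`, `0 < λ ≤ 1`, then
`σ(∂Q \ cl* E) ≤ C_d · λ^{-(d-1)/d} · σ(∂*E ∩ interior Q)` where `σ = μH^{d-1}`. -/
theorem boundary_not_in_closure_bound (d : ℕ) (hd : 1 ≤ d) :
    ∃ C : ℝ≥0∞, C ≠ ∞ ∧
      ∀ (E Q : Set (Ed d)), MeasurableSet E → IsCube Q →
        ∀ lam : ℝ, 0 < lam → lam ≤ 1 →
          volume (E ∩ Q) = ENNReal.ofReal lam * volume Q →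
          μH[(d:ℝ) - 1] (frontier Q \ mtClosure E) ≤
            C * ENNReal.ofReal (lam ^ (-((d:ℝ) - 1) / d)) *
              μH[(d:ℝ) - 1] (mtBoundary E ∩ interior Q) := by
  obtain ⟨n, rfl⟩ : ∃ n, d = n + 1 := ⟨d - 1, by omega⟩
  obtain ⟨C, hC, h⟩ := exists_hausdorffMeasure_frontier_mul_rpow_le n
  refine ⟨C, hC, ?_⟩
  rintro E Q hE ⟨a, l, hl, rfl⟩ lam hlam hlam1 hvol
  have key := h E a.ofLp l (ENNReal.ofReal lam) hE hl (by simpa using hlam) (by simpa using hlam1)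
    hvol
  have hd1 : ((n + 1 : ℕ) : ℝ) - 1 = n := by push_cast; ring
  have hexp : -(n : ℝ) / (n + 1 : ℕ) = -((n : ℝ) / (n + 1)) := by push_cast; ring
  rw [hd1, hexp, ← ENNReal.ofReal_rpow_of_pos hlam, mul_right_comm, ENNReal.rpow_neg,
    ← div_eq_mul_inv]
  exact (ENNReal.le_div_iff_mul_le (Or.inl (by simp [hlam])) (Or.inl (by simp [hlam.not_ge]))).2 key

end
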